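/- (Measurable coupling transfer) Let X and Z be random variables on a probability space taking values in standard Borel (separable metric) spaces E₁ and E₂. Then there exists a jointly measurable function F : E₂ × [0,1] → E₁ such that if U is uniform on [0,1] and independent of Z, then the pair (F(Z,U), Z) has the same joint law as (X, Z). -/

import Mathlib

open MeasureTheory ProbabilityTheory

/-! Disintegrate the law of `(Z, X)` as `μ.map Z ⊗ₘ κ` with `κ` the conditional distribution of `X`
given `Z`. Since `E₁` is standard Borel, the inverse conditional CDF writes every `κ z` as the image
of Lebesgue measure on `[0,1]` under a map `F z` that is jointly measurable in `z`. For `U` uniform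
and independent of `Z'`, the law of `(Z', U)` is a product, so that of `(Z', F Z' U)` is
`μ'.map Z' ⊗ₘ κ`. -/

section

variable {α β γ : Type*} [MeasurableSpace α] [MeasurableSpace β] [MeasurableSpace γ]

theorem measurePreserving_projIcc [LinearOrder α] [TopologicalSpace α] [OrderTopology α]
    [BorelSpace α] (μ : Measure α) {a b : α} (h : a ≤ b) :
    MeasurePreserving (Set.projIcc a b h) (μ.restrict (Set.Icc a b))
      (μ.comap (Subtype.val : Set.Icc a b → α)) := by
  have hproj : Measurable (Set.projIcc a b h) := continuous_projIcc.measurable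
  refine ⟨hproj, ?_⟩
  have hleft : Set.projIcc a b h ∘ Subtype.val = id := funext (Set.projIcc_val h)
  rw [← map_comap_subtype_coe measurableSet_Icc μ, Measure.map_map hproj measurable_subtype_coe,
    hleft, Measure.map_id]

theorem exists_measurable_map_restrict_Icc_eq_kernel [StandardBorelSpace β] [Nonempty β]
    (κ : Kernel α β) [IsMarkovKernel κ] :
    ∃ f : α → ℝ → β, Measurable (Function.uncurry f) ∧
      ∀ a, (volume.restrict (Set.Icc (0 : ℝ) 1)).map (f a) = κ a := by
  obtain ⟨g, hg, hgκ⟩ := κ.exists_measurable_map_eq_unitInterval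
  have hproj : MeasurePreserving (Set.projIcc (0 : ℝ) 1 zero_le_one)
      (volume.restrict (Set.Icc 0 1)) (volume : Measure unitInterval) :=
    measurePreserving_projIcc volume zero_le_one
  refine ⟨fun a u => g a (Set.projIcc 0 1 zero_le_one u),
    hg.comp (measurable_id.prodMap hproj.measurable), fun a => ?_⟩
  rw [← hgκ a, ← hproj.map_eq, Measure.map_map hg.of_uncurry_left hproj.measurable]
  rfl

theorem map_prod_eq_compProd {ν : Measure α} [SFinite ν] {ρ : Measure β} [SFinite ρ]
    {κ : Kernel α γ} [IsSFiniteKernel κ] {f : α → β → γ} (hf : Measurable (Function.uncurry f))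
    (hκ : ∀ᵐ a ∂ν, ρ.map (f a) = κ a) :
    (ν.prod ρ).map (fun p => (p.1, f p.1 p.2)) = ν ⊗ₘ κ := by
  have hg : Measurable (fun p : α × β => (p.1, f p.1 p.2)) := measurable_fst.prodMk hf
  ext s hs
  rw [Measure.map_apply hg hs, Measure.prod_apply (hg hs), Measure.compProd_apply hs]
  refine lintegral_congr_ae ?_
  filter_upwards [hκ] with a ha
  rw [← ha, Measure.map_apply hf.of_uncurry_left (measurable_prodMk_left hs)]
  rfl

theorem map_prodMk_eq_compProd_of_indepFun {Ω : Type*} [MeasurableSpace Ω] {μ : Measure Ω}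
    [IsFiniteMeasure μ] {Z : Ω → α} {U : Ω → β} (hZ : AEMeasurable Z μ) (hU : AEMeasurable U μ)
    (hZU : IndepFun Z U μ) {κ : Kernel α γ} [IsSFiniteKernel κ] {f : α → β → γ}
    (hf : Measurable (Function.uncurry f)) (hκ : ∀ᵐ z ∂μ.map Z, (μ.map U).map (f z) = κ z) :
    μ.map (fun ω => (Z ω, f (Z ω) (U ω))) = μ.map Z ⊗ₘ κ := by
  have hg : Measurable (fun p : α × β => (p.1, f p.1 p.2)) := measurable_fst.prodMk hf
  rw [← map_prod_eq_compProd hf hκ, ← (indepFun_iff_map_prod_eq_prod_map_map hZ hU).1 hZU,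
    AEMeasurable.map_map_of_aemeasurable hg.aemeasurable (hZ.prodMk hU)]
  rfl

end

theorem stmt6_general {Ω E₁ E₂ : Type*} [MeasurableSpace Ω]
    [MeasurableSpace E₁] [StandardBorelSpace E₁] [MeasurableSpace E₂]
    (μ : Measure Ω) [IsProbabilityMeasure μ]
    {X : Ω → E₁} {Z : Ω → E₂} (hX : AEMeasurable X μ) (hZ : AEMeasurable Z μ) :
    ∃ F : E₂ → ℝ → E₁, Measurable (Function.uncurry F) ∧
      ∀ {Ω' : Type*} [MeasurableSpace Ω'] {μ' : Measure Ω'} {Z' : Ω' → E₂} {U : Ω' → ℝ},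
        HasLaw U (volume.restrict (Set.Icc 0 1)) μ' → IndepFun Z' U μ' → IdentDistrib Z' Z μ' μ →
          IdentDistrib (fun ω => (F (Z' ω) (U ω), Z' ω)) (fun ω => (X ω, Z ω)) μ' μ := by
  have : Nonempty E₁ := (nonempty_of_isProbabilityMeasure μ).map X
  obtain ⟨F, hF, hFκ⟩ := exists_measurable_map_restrict_Icc_eq_kernel (condDistrib X Z μ)
  refine ⟨F, hF, fun {_} _ {μ' Z' U} hU hind hZ' => ?_⟩
  have : IsFiniteMeasure μ' := hU.isFiniteMeasure
  have hZ'm : AEMeasurable Z' μ' := hZ'.aemeasurable_fst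
  have hpair : IdentDistrib (fun ω => (Z' ω, F (Z' ω) (U ω))) (fun ω => (Z ω, X ω)) μ' μ :=
    { aemeasurable_fst := hZ'm.prodMk (hF.comp_aemeasurable (hZ'm.prodMk hU.aemeasurable))
      aemeasurable_snd := hZ.prodMk hX
      map_eq := by
        rw [map_prodMk_eq_compProd_of_indepFun hZ'm hU.aemeasurable hind hF
          (.of_forall (hU.map_eq ▸ hFκ)), hZ'.map_eq, compProd_map_condDistrib hX] }
  exact hpair.comp measurable_swap

/-- Measurable coupling transfer: if `X, Z` are random variables with
values in standard Borel spaces `E₁, E₂`, there is a jointly measurable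
`F : E₂ × [0,1] → E₁` such that whenever `U` is uniform on `[0,1]` and independent
of a copy `Z'` of `Z`, the pair `(F(Z',U), Z')` has the same joint law as `(X,Z)`. -/
theorem stmt6 {Ω E₁ E₂ : Type*} [MeasurableSpace Ω]
    [MeasurableSpace E₁] [StandardBorelSpace E₁]
    [MeasurableSpace E₂] [StandardBorelSpace E₂]
    (μ : Measure Ω) [IsProbabilityMeasure μ]
    (X : Ω → E₁) (Z : Ω → E₂) (hX : Measurable X) (hZ : Measurable Z) :
    ∃ F : E₂ → ℝ → E₁, Measurable (fun p : E₂ × ℝ => F p.1 p.2) ∧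
      ∀ (Ω' : Type) (_ : MeasurableSpace Ω') (μ' : Measure Ω'),
        IsProbabilityMeasure μ' →
        ∀ (Z' : Ω' → E₂) (U : Ω' → ℝ), Measurable Z' → Measurable U →
          μ'.map U = volume.restrict (Set.Icc (0 : ℝ) 1) →
          IndepFun Z' U μ' →
          μ'.map Z' = μ.map Z →
          μ'.map (fun ω => (F (Z' ω) (U ω), Z' ω)) =
            μ.map (fun ω => (X ω, Z ω)) := by
  obtain ⟨F, hF, hlaw⟩ := stmt6_general μ hX.aemeasurable hZ.aemeasurable
  exact ⟨F, hF, fun _ _ _ _ _ _ hZ' hU hUlaw hind hZlaw =>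
    (hlaw ⟨hU.aemeasurable, hUlaw⟩ hind ⟨hZ'.aemeasurable, hZ.aemeasurable, hZlaw⟩).map_eq⟩
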